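/- Under the hypotheses of the two shift-transport lemmas (compatibility condition σ_t((1/e)M)·(1/e_t)M_t = σ_x((1/e_t)M_t)·(1/e)M for invertible matrices with gcd of entries of M with e and of M_t with e_t equal to 1, and gcd(det(M), σ_x^i(e)) = 1 in C(t)[x] for all nonzero i ∈ ℤ), the polynomials e·det(M) and e_t·det(M_t) are both integer-linear. -/

import Mathlib

/-!
Write `A = M / e`, `B = Mt / et`, so that `σ_t(A) B = σ_x(B) A`. An irreducible polynomial `q`
fixed up to a constant by a nontrivial shift `(a, b)` is constant along every line of direction
`(a, b)`, hence is a polynomial in `b t - a x` (`integerLinear_of_associated`). So it suffices to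
exclude an irreducible factor `q` whose orbit under the shifts is free (`FreeIrred`). Only finitely
many members of such an orbit divide a given nonzero polynomial (`FreeIrred.bound`).

Let `P = σ_x^N(A) ⋯ σ_x(A) A σ_x⁻¹(A) ⋯ σ_x^(-N)(A)`. The compatibility relation telescopes to
`σ_t(P) σ_x^(-N)(B) = σ_x^(N+1)(B) P`. For `N` large, every `t`-shift of the two outer `B`-factors
is invertible over the local ring at `q`, so `P` and all its `t`-shifts are equivalent over that
ring. Sufficiently far out, `σ_t^k(P)` is itself invertible there; hence the `q`-adic valuation of
`P` (the minimum over the entries) is `0` (`Compat.valZero_mprod`).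

If `q ∣ e`, shift-freeness makes `σ_x^k(M)` invertible at `q` for `k ≠ 0`, while `M` is nonzero
modulo `q` by the gcd condition. Thus the numerator of `P` is nonzero modulo `q`, whereas its
denominator is divisible by `q`, contradicting valuation `0`. So no free irreducible divides `e`,
and the same valuation statement for the `1 × 1` matrices `det A`, `det B` shows that none divides
`det M`. Now `A` is invertible along the whole orbit of `q`, so the relation makes the valuation
of `B` constant along `x`-shifts, hence `0` (`Compat.valZero_t`). The gcd condition gives
`q ∤ et`, and the determinant version gives `q ∤ det Mt`.
-/


open MvPolynomial

/-- The shift automorphism of `K[t,x]` sending `t ↦ t + a`, `x ↦ x + b`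
(variable `0` is `t`, variable `1` is `x`). -/
noncomputable def shift2 (K : Type*) [Field K] [CharZero K] (a b : ℤ) :
    MvPolynomial (Fin 2) K →ₐ[K] MvPolynomial (Fin 2) K :=
  aeval (fun i => X i + MvPolynomial.C (if i = 0 then (a : K) else (b : K)))

/-- A polynomial in `K[t,x]` is integer-linear if every irreducible factor has the
form `h(mt + nx)` with `h ∈ K[z]` and `m, n ∈ ℤ`. -/
def IsIntegerLinear {K : Type*} [Field K] [CharZero K] (p : MvPolynomial (Fin 2) K) : Prop :=
  ∀ q : MvPolynomial (Fin 2) K, Irreducible q → q ∣ p →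
    ∃ (h : Polynomial K) (m n : ℤ),
      q = Polynomial.aeval ((m : K) • (X 0 : MvPolynomial (Fin 2) K) + (n : K) • X 1) h

/-! ### Shifts -/

section Shifts

variable {K : Type*} [Field K] [CharZero K]

lemma shift2_add (a b c d : ℤ) (p : MvPolynomial (Fin 2) K) :
    shift2 K a b (shift2 K c d p) = shift2 K (a + c) (b + d) p := by
  have : (shift2 K a b).comp (shift2 K c d) = shift2 K (a + c) (b + d) := by
    apply MvPolynomial.algHom_ext
    intro i
    fin_cases i <;>
      simp [shift2, add_assoc]
  exact DFunLike.congr_fun this p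

lemma shift2_zero (p : MvPolynomial (Fin 2) K) : shift2 K 0 0 p = p := by
  have : shift2 K 0 0 = AlgHom.id K _ := by
    apply MvPolynomial.algHom_ext
    intro i
    fin_cases i <;> simp [shift2]
  exact DFunLike.congr_fun this p

lemma shift2_dvd_iff (a b : ℤ) (p q : MvPolynomial (Fin 2) K) :
    shift2 K a b p ∣ q ↔ p ∣ shift2 K (-a) (-b) q := by
  constructor
  · intro h
    simpa [shift2_add, shift2_zero] using map_dvd (shift2 K (-a) (-b)) h
  · intro h
    simpa [shift2_add, shift2_zero] using map_dvd (shift2 K a b) h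

lemma shift2_inj (a b : ℤ) : Function.Injective (shift2 K a b) := fun p q h => by
  simpa [shift2_add, shift2_zero] using congrArg (shift2 K (-a) (-b)) h

lemma shift2_ne_zero (a b : ℤ) {p : MvPolynomial (Fin 2) K} (h : p ≠ 0) : shift2 K a b p ≠ 0 :=
  fun h0 => h (shift2_inj a b (by simpa using h0))

/-- `shift2 K a b` as a ring automorphism. -/
noncomputable def shiftEquiv (a b : ℤ) : MvPolynomial (Fin 2) K ≃+* MvPolynomial (Fin 2) K :=
  RingEquiv.ofRingHom (shift2 K a b).toRingHom (shift2 K (-a) (-b)).toRingHom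
    (RingHom.ext fun p => by simp [shift2_add, shift2_zero])
    (RingHom.ext fun p => by simp [shift2_add, shift2_zero])

lemma shift2_irreducible (a b : ℤ) {q : MvPolynomial (Fin 2) K} (h : Irreducible q) :
    Irreducible (shift2 K a b q) :=
  (MulEquiv.irreducible_iff (shiftEquiv (K := K) a b)).2 h

/-! ### Irreducible polynomials with a free shift orbit -/

/-- `q` is irreducible and no nontrivial shift fixes it up to a constant. -/
def FreeIrred (q : MvPolynomial (Fin 2) K) : Prop :=
  Irreducible q ∧ ∀ a b : ℤ, Associated (shift2 K a b q) q → a = 0 ∧ b = 0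

lemma FreeIrred.shift {q : MvPolynomial (Fin 2) K} (h : FreeIrred q) (a b : ℤ) :
    FreeIrred (shift2 K a b q) := by
  refine ⟨shift2_irreducible a b h.1, fun c d hcd => h.2 c d ?_⟩
  have := hcd.map (shift2 K (-a) (-b))
  simp only [shift2_add] at this
  have e1 : -a + (c + a) = c := by ring
  have e2 : -b + (d + b) = d := by ring
  simpa [e1, e2, shift2_zero] using this

/-- A free orbit meets the factors of a nonzero polynomial in a finite set. -/
lemma FreeIrred.bound {q : MvPolynomial (Fin 2) K} (h : FreeIrred q)
    {f : MvPolynomial (Fin 2) K} (hf : f ≠ 0) :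
    ∃ B : ℕ, ∀ a b : ℤ, ((B : ℤ) ≤ |a| ∨ (B : ℤ) ≤ |b|) → ¬ q ∣ shift2 K a b f := by
  classical
  -- distinct points of `T` give non-associated irreducible factors of `f`
  let T : Set (ℤ × ℤ) := {z | q ∣ shift2 K z.1 z.2 f}
  have key : ∀ z : ℤ × ℤ, z ∈ T → ∃ g ∈ UniqueFactorizationMonoid.factors f,
      Associated (shift2 K (-z.1) (-z.2) q) g := by
    intro z hz
    apply UniqueFactorizationMonoid.exists_mem_factors_of_dvd hf (shift2_irreducible _ _ h.1)
    rw [shift2_dvd_iff, neg_neg, neg_neg]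
    exact hz
  choose! F hF hA using key
  have hfin : T.Finite := by
    apply Set.Finite.of_finite_image (f := F)
    · apply Set.Finite.subset (UniqueFactorizationMonoid.factors f).toFinset.finite_toSet
      rintro _ ⟨z, hz, rfl⟩
      simpa using hF z hz
    · intro z hz w hw hzw
      have h1 := (hA z hz).trans (hzw ▸ (hA w hw).symm)
      have h2 := h1.map (shift2 K w.1 w.2)
      simp only [shift2_add, add_neg_cancel, shift2_zero] at h2
      obtain ⟨h3, h4⟩ := h.2 _ _ h2
      ext <;> omega
  obtain ⟨B, hB⟩ := (hfin.image fun z : ℤ × ℤ => z.1.natAbs + z.2.natAbs).bddAbove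
  refine ⟨B + 1, fun a b hab hd => ?_⟩
  have : a.natAbs + b.natAbs ≤ B := hB ⟨(a, b), hd, rfl⟩
  rw [Int.abs_eq_natAbs, Int.abs_eq_natAbs] at hab
  omega

/-- The restriction of `q` to each line of direction `(a, b)` is a univariate polynomial `f` with
`f(z+1) = c f(z)`: comparing leading coefficients gives `c = 1`, and a periodic polynomial is
constant in characteristic zero. -/
lemma eval_line_of_associated {q : MvPolynomial (Fin 2) K} (hq : q ≠ 0) {a b : ℤ}
    (h : Associated (shift2 K a b q) q) (P : Fin 2 → K) (z : K) :
    eval (fun i => P i + z * (if i = 0 then (a : K) else (b : K))) q = eval P q := by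
  obtain ⟨u, hu⟩ := h.symm
  obtain ⟨c, hc, huc⟩ := MvPolynomial.isUnit_iff_eq_C_of_isReduced.1 u.isUnit
  let v : Fin 2 → K := fun i => if i = 0 then (a : K) else (b : K)
  let L : (Fin 2 → K) → Polynomial K := fun P =>
    aeval (fun i => Polynomial.C (P i) + Polynomial.C (v i) * Polynomial.X) q
  have hL : ∀ P z, (L P).eval z = eval (fun i => P i + z * v i) q := by
    intro P z
    have : (Polynomial.aeval z).comp (aeval (R := K) (fun i : Fin 2 =>
        (Polynomial.C (P i) + Polynomial.C (v i) * Polynomial.X : Polynomial K)))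
        = aeval (fun i => P i + z * v i) := by
      apply MvPolynomial.algHom_ext
      intro i
      simp [mul_comm z]
    have := DFunLike.congr_fun this q
    simpa [MvPolynomial.aeval_eq_eval, ← Polynomial.coe_aeval_eq_eval] using this
  have hs : ∀ P, eval P (shift2 K a b q) = eval (fun i => P i + v i) q := by
    intro P
    have : (aeval (R := K) P).comp (shift2 K a b) = aeval (fun i => P i + v i) := by
      apply MvPolynomial.algHom_ext
      intro i
      simp [shift2, v]
    have := DFunLike.congr_fun this q
    simpa [MvPolynomial.aeval_eq_eval] using this
  have hper0 : ∀ P, eval (fun i => P i + v i) q = c * eval P q := by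
    intro P
    rw [← hs, ← hu, huc]
    simp [mul_comm]
  have hperL : ∀ P z, (L P).eval (z + 1) = c * (L P).eval z := by
    intro P z
    rw [hL, hL, ← hper0]
    congr 2
    funext i
    ring
  obtain ⟨P₀, hP₀⟩ : ∃ P₀, eval P₀ q ≠ 0 := by
    by_contra! h0
    exact hq (MvPolynomial.funext (by simpa using h0))
  have hc1 : c = 1 := by
    have hne : L P₀ ≠ 0 := by
      intro h0
      apply hP₀
      have := hL P₀ 0
      simpa [h0] using this.symm
    have hcomp : (L P₀).comp (Polynomial.X + Polynomial.C 1) = Polynomial.C c * L P₀ := by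
      apply Polynomial.funext
      intro z
      simpa using hperL P₀ z
    have hlc := congrArg Polynomial.leadingCoeff hcomp
    rw [Polynomial.leadingCoeff_comp (by rw [Polynomial.natDegree_X_add_C]; exact one_ne_zero)] at hlc
    simp only [Polynomial.leadingCoeff_X_add_C, one_pow, mul_one, Polynomial.leadingCoeff_mul,
      Polynomial.leadingCoeff_C] at hlc
    exact (mul_right_cancel₀ (Polynomial.leadingCoeff_ne_zero.2 hne) (by simpa using hlc)).symm
  have hconst : L P = Polynomial.C ((L P).eval 0) := by
    apply Polynomial.eq_of_infinite_eval_eq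
    apply Set.Infinite.mono _ (Set.infinite_range_of_injective (Nat.cast_injective (R := K)))
    rintro _ ⟨n, rfl⟩
    simp only [Set.mem_ofPred_eq, Polynomial.eval_C]
    induction n with
    | zero => simp
    | succ n ih => rw [Nat.cast_succ, hperL, hc1, one_mul, ih]
  have h1 := hL P z
  rw [hconst, Polynomial.eval_C, hL] at h1
  simpa [v] using h1.symm

lemma integerLinear_of_associated {q : MvPolynomial (Fin 2) K} (hq : q ≠ 0) {a b : ℤ}
    (hab : ¬ (a = 0 ∧ b = 0)) (h : Associated (shift2 K a b q) q) :
    ∃ (h : Polynomial K) (m n : ℤ),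
      q = Polynomial.aeval ((m : K) • (X 0 : MvPolynomial (Fin 2) K) + (n : K) • X 1) h := by
  have hline := eval_line_of_associated hq h
  -- `g v` is `q` along the line through the origin in direction `v`
  let g : (Fin 2 → K) → Polynomial K := fun v => aeval (fun i => Polynomial.C (v i) * Polynomial.X) q
  have hg : ∀ (v P : Fin 2 → K) (m n : ℤ), eval P (Polynomial.aeval
      ((m : K) • (X 0 : MvPolynomial (Fin 2) K) + (n : K) • X 1) (g v))
      = eval (fun i => v i * (m * P 0 + n * P 1)) q := by
    intro v P m n
    have : ((aeval (R := K) P).comp (Polynomial.aeval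
        ((m : K) • (X 0 : MvPolynomial (Fin 2) K) + (n : K) • X 1))).comp
        (aeval (R := K) (fun i : Fin 2 => (Polynomial.C (v i) * Polynomial.X : Polynomial K)))
        = aeval (fun i => v i * (m * P 0 + n * P 1)) := by
      apply MvPolynomial.algHom_ext
      intro i
      simp
    have := DFunLike.congr_fun this q
    simpa [MvPolynomial.aeval_eq_eval] using this
  by_cases ha : a = 0
  · have hb : (b : K) ≠ 0 := by
      have : b ≠ 0 := fun hb => hab ⟨ha, hb⟩
      exact_mod_cast this
    refine ⟨g (fun i => if i = 0 then (b : K)⁻¹ else 0), b, -a, MvPolynomial.funext fun P => ?_⟩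
    rw [hg, ← hline P (-(P 1) / b)]
    congr 2
    funext i
    fin_cases i <;> simp [ha] <;> field_simp
    ring
  · have ha' : (a : K) ≠ 0 := by exact_mod_cast ha
    refine ⟨g (fun i => if i = 0 then 0 else -(a : K)⁻¹), b, -a, MvPolynomial.funext fun P => ?_⟩
    rw [hg, ← hline P (-(P 0) / a)]
    congr 2
    funext i
    fin_cases i <;> simp <;> field_simp <;> ring

lemma FreeIrred.degreeOf_ne_zero {q : MvPolynomial (Fin 2) K} (h : FreeIrred q) :
    degreeOf 1 q ≠ 0 := by
  -- otherwise `q` does not involve `x`, so `σ_x` fixes it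
  intro h0
  have hv : (1 : Fin 2) ∉ q.vars := by
    intro hm
    rw [degreeOf_def, Multiset.count_eq_zero] at h0
    exact h0 (by simpa [vars_def] using hm)
  have : shift2 K 0 1 q = q := by
    have := MvPolynomial.hom_congr_vars (p₁ := q) (p₂ := q)
      (f₁ := (shift2 K 0 1 : MvPolynomial (Fin 2) K →+* MvPolynomial (Fin 2) K))
      (f₂ := RingHom.id _) (by ext1; simp [shift2, MvPolynomial.algebraMap_eq]) ?_ rfl
    · simpa using this
    · intro i hi _
      fin_cases i
      · simp [shift2]
      · exact absurd hi hv
  have := h.2 0 1 (by rw [this])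
  omega

lemma freeIrred_of_not_integerLinear {q : MvPolynomial (Fin 2) K} (hq : Irreducible q)
    (h : ¬ ∃ (h : Polynomial K) (m n : ℤ),
      q = Polynomial.aeval ((m : K) • (X 0 : MvPolynomial (Fin 2) K) + (n : K) • X 1) h) :
    FreeIrred q :=
  ⟨hq, fun _ _ hA => by_contra fun hab => h (integerLinear_of_associated hq.ne_zero hab hA)⟩

end Shifts

/-! ### Divisibility of matrices by powers of a prime -/

section Valuation

variable {R : Type*} [CommRing R] [IsDomain R] {n : Type*} [Fintype n] [DecidableEq n]

lemma dvd_mul_left_iff {q : R} (hq : Prime q) (k : ℕ) {U : Matrix n n R} (hU : ¬ q ∣ U.det)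
    (N : Matrix n n R) : (∀ i j, q ^ k ∣ (U * N) i j) ↔ ∀ i j, q ^ k ∣ N i j := by
  constructor
  · intro h i j
    have : (U.adjugate * (U * N)) i j = U.det * N i j := by
      rw [← Matrix.mul_assoc, Matrix.adjugate_mul]; simp
    refine hq.pow_dvd_of_dvd_mul_left k hU ?_
    rw [← this, Matrix.mul_apply]
    exact Finset.dvd_sum fun l _ => (h l j).mul_left _
  · intro h i j
    rw [Matrix.mul_apply]
    exact Finset.dvd_sum fun l _ => (h l j).mul_left _

lemma dvd_mul_right_iff {q : R} (hq : Prime q) (k : ℕ) {U : Matrix n n R} (hU : ¬ q ∣ U.det)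
    (N : Matrix n n R) : (∀ i j, q ^ k ∣ (N * U) i j) ↔ ∀ i j, q ^ k ∣ N i j := by
  have h := dvd_mul_left_iff hq k (U := U.transpose) (by simpa using hU) N.transpose
  rw [← Matrix.transpose_mul] at h
  simp only [Matrix.transpose_apply] at h
  exact ⟨fun h1 i j => h.1 (fun a b => h1 b a) j i, fun h1 i j => h.2 (fun a b => h1 b a) j i⟩

/-- The fraction `N / E` has `q`-adic valuation `0`, the valuation of a matrix being the minimum
over its entries. Phrased without fractions: `E` and `N` are divisible by the same powers of `q`;
for `E ≠ 0` this forces the index type to be nonempty. -/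
def ValZero (q : R) (E : R) (N : Matrix n n R) : Prop :=
  ∀ k : ℕ, q ^ k ∣ E ↔ ∀ i j, q ^ k ∣ N i j

omit [IsDomain R] in
lemma valZero_of_not_dvd [Nonempty n] {q : R} {E : R} {N : Matrix n n R}
    (hE : ¬ q ∣ E) (hN : ¬ q ∣ N.det) : ValZero q E N := by
  intro k
  rcases Nat.eq_zero_or_pos k with rfl | hk
  · simp
  · have hqk : q ∣ q ^ k := dvd_pow_self q hk.ne'
    refine ⟨fun h => absurd (hqk.trans h) hE, fun h => absurd ?_ hN⟩
    obtain ⟨i⟩ := ‹Nonempty n›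
    rw [Matrix.det_apply]
    refine Finset.dvd_sum fun s _ => ?_
    rw [Units.smul_def, zsmul_eq_mul]
    have hqi : q ∣ N (s i) i := hqk.trans (h (s i) i)
    exact (hqi.trans (Finset.dvd_prod_of_mem (fun j => N (s j) j) (Finset.mem_univ i))).mul_left _

/-- Valuation zero passes between matrix fractions that are equivalent over the local ring
at `q`. -/
lemma ValZero.step [WfDvdMonoid R] {q : R} (hq : Prime q) {c₁ c₂ E₁ E₂ : R}
    {N₁ N₂ U₁ U₂ : Matrix n n R} (hE₁ : E₁ ≠ 0)
    (hc₁ : ¬ q ∣ c₁) (hc₂ : ¬ q ∣ c₂) (hU₁ : ¬ q ∣ U₁.det) (hU₂ : ¬ q ∣ U₂.det)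
    (h : (c₁ * E₁) • (N₂ * U₂) = (c₂ * E₂) • (U₁ * N₁)) (hb : ValZero q E₁ N₁) :
    ValZero q E₂ N₂ := by
  obtain ⟨a, w, hw, rfl⟩ := WfDvdMonoid.max_power_factor hE₁ hq.irreducible
  have hqa : q ^ a ≠ 0 := pow_ne_zero _ hq.ne_zero
  have h1 := (hb a).1 (dvd_mul_right _ _)
  choose N' hN' using h1
  obtain rfl : N₁ = q ^ a • (Matrix.of N') := by ext i j; simp [hN']
  set N₁' := Matrix.of N' with hN₁'
  have h2 : ¬ ∀ i j, q ^ 1 ∣ N₁' i j := by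
    intro hd
    have := (hb (a + 1)).2 (fun i j => by
      rw [pow_succ, Matrix.smul_apply, smul_eq_mul]
      exact mul_dvd_mul_left _ (by simpa using hd i j))
    rw [pow_succ] at this
    exact hw ((mul_dvd_mul_iff_left hqa).1 this)
  have h3 : (c₁ * w) • (N₂ * U₂) = (c₂ * E₂) • (U₁ * N₁') := by
    apply smul_right_injective _ hqa
    simp only [Matrix.mul_smul, smul_smul] at h ⊢
    convert h using 2 <;> ring
  have h4 : ∀ i j, c₁ * w * (N₂ * U₂) i j = c₂ * E₂ * (U₁ * N₁') i j := fun i j => by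
    simpa using congrFun (congrFun h3 i) j
  have hcw : ¬ q ∣ c₁ * w := fun hd => (hq.dvd_or_dvd hd).elim hc₁ hw
  intro k
  constructor
  · intro hk
    rw [← dvd_mul_right_iff hq k hU₂]
    intro i j
    apply hq.pow_dvd_of_dvd_mul_left k hcw
    rw [h4]
    exact (hk.mul_left _).mul_right _
  · intro hk
    rw [← dvd_mul_right_iff hq k hU₂] at hk
    rw [← dvd_mul_left_iff hq 1 hU₁] at h2
    push Not at h2
    obtain ⟨i, j, hij⟩ := h2
    rw [pow_one] at hij
    have h5 : q ^ k ∣ c₂ * E₂ * (U₁ * N₁') i j := by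
      rw [← h4]; exact (hk i j).mul_left _
    exact hq.pow_dvd_of_dvd_mul_left k hc₂ (hq.pow_dvd_of_dvd_mul_right k hij h5)

omit [DecidableEq n] in
/-- Telescoping: a compatibility relation for `P` composes with one for `A`, the common
intermediate denominator `f` being cancelled. -/
lemma compat_step {f f' s e₀ s₁ e₁ g : R} {A A₁ P P₁ B₀ B B' : Matrix n n R} (hf : f ≠ 0)
    (hP : (f * s) • (P₁ * B₀) = (s₁ * g) • (B * P))
    (hA : (f' * e₀) • (A₁ * B) = (e₁ * f) • (B' * A)) :
    (f' * (s * e₀)) • (A₁ * P₁ * B₀) = (s₁ * e₁ * g) • (B' * (A * P)) := by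
  apply smul_right_injective _ hf
  calc f • (f' * (s * e₀)) • (A₁ * P₁ * B₀)
      = (f' * e₀) • (A₁ * ((f * s) • (P₁ * B₀))) := by
        rw [Matrix.mul_smul, smul_smul, smul_smul, Matrix.mul_assoc]
        congr 1; ring
    _ = (s₁ * g) • (((f' * e₀) • (A₁ * B)) * P) := by
        rw [hP, Matrix.mul_smul, Matrix.smul_mul, smul_smul, smul_smul, Matrix.mul_assoc]
        congr 1; ring
    _ = f • (s₁ * e₁ * g) • (B' * (A * P)) := by
        rw [hA, Matrix.smul_mul, smul_smul, smul_smul, Matrix.mul_assoc]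
        congr 1; ring

end Valuation

/-! ### Transport of valuations along the shifts -/

section Transport

variable {K : Type*} [Field K] [CharZero K] {n : Type*} [Fintype n] [DecidableEq n]

/-- The matrix `M` with all entries shifted by `(a, b)`. -/
noncomputable def mshift (a b : ℤ) (M : Matrix n n (MvPolynomial (Fin 2) K)) :
    Matrix n n (MvPolynomial (Fin 2) K) := M.map (shift2 K a b)

omit [Fintype n] [DecidableEq n] in
lemma mshift_mshift (a b c d : ℤ) (M : Matrix n n (MvPolynomial (Fin 2) K)) :
    mshift a b (mshift c d M) = mshift (a + c) (b + d) M := by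
  ext1 i j; simp [mshift, shift2_add]

omit [Fintype n] [DecidableEq n] in
lemma mshift_zero (M : Matrix n n (MvPolynomial (Fin 2) K)) : mshift 0 0 M = M := by
  ext1 i j; simp [mshift, shift2_zero]

omit [DecidableEq n] in
lemma mshift_mul (a b : ℤ) (M N : Matrix n n (MvPolynomial (Fin 2) K)) :
    mshift a b (M * N) = mshift a b M * mshift a b N := Matrix.map_mul

omit [Fintype n] [DecidableEq n] in
lemma mshift_smul (a b : ℤ) (c : MvPolynomial (Fin 2) K)
    (N : Matrix n n (MvPolynomial (Fin 2) K)) :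
    mshift a b (c • N) = shift2 K a b c • mshift a b N := by
  ext1 i j; simp [mshift]

lemma det_mshift (a b : ℤ) (M : Matrix n n (MvPolynomial (Fin 2) K)) :
    (mshift a b M).det = shift2 K a b M.det := (AlgHom.map_det _ _).symm

/-- The ordered product `σ_x^(a+l-1)(M) ⋯ σ_x^(a+1)(M) · σ_x^a(M)`. -/
noncomputable def mprod (M : Matrix n n (MvPolynomial (Fin 2) K)) (a : ℤ) :
    ℕ → Matrix n n (MvPolynomial (Fin 2) K)
  | 0 => 1
  | l + 1 => mshift 0 (a + l) M * mprod M a l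

/-- The product `σ_x^a(e) · σ_x^(a+1)(e) ⋯ σ_x^(a+l-1)(e)`. -/
noncomputable def sprod (e : MvPolynomial (Fin 2) K) (a : ℤ) (l : ℕ) : MvPolynomial (Fin 2) K :=
  ∏ m ∈ Finset.range l, shift2 K 0 (a + m) e

lemma det_mprod (M : Matrix n n (MvPolynomial (Fin 2) K)) (a : ℤ) (l : ℕ) :
    (mprod M a l).det = sprod M.det a l := by
  induction l with
  | zero => simp [mprod, sprod]
  | succ l ih =>
    rw [mprod, Matrix.det_mul, ih, det_mshift, sprod, sprod, Finset.prod_range_succ, mul_comm]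

/-- Compatibility of `M / e` and `Mt / et`, cleared of denominators:
`σ_t(M/e) · (Mt/et) = σ_x(Mt/et) · (M/e)`. -/
def Compat (e et : MvPolynomial (Fin 2) K) (M Mt : Matrix n n (MvPolynomial (Fin 2) K)) : Prop :=
  (shift2 K 0 1 et * e) • (mshift 1 0 M * Mt) = (shift2 K 1 0 e * et) • (mshift 0 1 Mt * M)

/-- Compatibility extends from one step in `x` to `l` steps. -/
lemma Compat.telescope {e et : MvPolynomial (Fin 2) K} {M Mt : Matrix n n (MvPolynomial (Fin 2) K)}
    (h : Compat e et M Mt) (het : et ≠ 0) (a : ℤ) (l : ℕ) :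
    (shift2 K 0 (a + l) et * sprod e a l) • (mshift 1 0 (mprod M a l) * mshift 0 a Mt)
      = (shift2 K 1 0 (sprod e a l) * shift2 K 0 a et) •
        (mshift 0 (a + l) Mt * mprod M a l) := by
  induction l with
  | zero =>
    have : mshift 1 0 (1 : Matrix n n (MvPolynomial (Fin 2) K)) = 1 := by
      simp [mshift]
    simp [mprod, sprod, this]
  | succ l ih =>
    have hs := congrArg (mshift 0 (a + l)) h
    simp only [mshift_smul, mshift_mul, mshift_mshift, map_mul, shift2_add, zero_add, add_zero]
      at hs
    have e1 : sprod e a (l + 1) = sprod e a l * shift2 K 0 (a + l) e := by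
      simp [sprod, Finset.prod_range_succ]
    have e2 : a + ((l + 1 : ℕ) : ℤ) = a + l + 1 := by push_cast; ring
    simp only [mprod, e1, e2, mshift_mul, mshift_mshift, map_mul, shift2_add, zero_add,
      add_zero]
    exact compat_step (shift2_ne_zero 0 (a + l) het) ih hs

lemma not_dvd_sprod {q : MvPolynomial (Fin 2) K} (hq : Prime q) {f : MvPolynomial (Fin 2) K}
    {a c : ℤ} {l : ℕ} (h : ∀ m < l, ¬ q ∣ shift2 K c (a + m) f) :
    ¬ q ∣ shift2 K c 0 (sprod f a l) := by
  rw [sprod, map_prod, hq.dvd_finsetProd_iff]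
  rintro ⟨m, hm, hd⟩
  rw [shift2_add] at hd
  exact h m (Finset.mem_range.1 hm) (by simpa using hd)

/-- For long enough windows, the product of the shifts of `M / e` in the direction `x` has
valuation `0` at every free irreducible: in the direction `t` it is transported by shifts of
`Mt / et` that are invertible at `q`, and far away it is itself invertible at `q`. -/
lemma Compat.valZero_mprod [Nonempty n] {e et : MvPolynomial (Fin 2) K}
    {M Mt : Matrix n n (MvPolynomial (Fin 2) K)} (h : Compat e et M Mt)
    (he : e ≠ 0) (het : et ≠ 0) (hM : M.det ≠ 0) (hMt : Mt.det ≠ 0)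
    {q : MvPolynomial (Fin 2) K} (hq : FreeIrred q) :
    ∃ N : ℕ, ValZero q (sprod e (-N) (2 * N + 1)) (mprod M (-N) (2 * N + 1)) := by
  have hqp := hq.1.prime
  obtain ⟨N, hN⟩ := hq.bound (mul_ne_zero het hMt)
  obtain ⟨B, hB⟩ := hq.bound (mul_ne_zero he hM)
  refine ⟨N, ?_⟩
  have hl : (-(N : ℤ)) + ((2 * N + 1 : ℕ) : ℤ) = N + 1 := by push_cast; ring
  have hrel := h.telescope het (-N) (2 * N + 1)
  rw [hl] at hrel
  set E := sprod e (-N) (2 * N + 1) with hE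
  set P := mprod M (-N) (2 * N + 1) with hP
  have hE0 : E ≠ 0 := Finset.prod_ne_zero_iff.2 fun m _ => shift2_ne_zero _ _ he
  -- far out in the direction `t` everything is prime to `q`; induct back to shift `0`
  have key : ∀ k : ℕ, ValZero q (shift2 K (-B + k) 0 E) (mshift (-B + k) 0 P) := by
    intro k
    induction k with
    | zero =>
      have hBd : ∀ b : ℤ, ¬ q ∣ shift2 K (-B + (0 : ℕ)) b (e * M.det) := fun b =>
        hB _ _ (Or.inl (by simp))
      simp only [map_mul] at hBd
      apply valZero_of_not_dvd
      · exact not_dvd_sprod hqp fun m _ hd => hBd _ (hd.mul_right _)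
      · rw [det_mshift, hP, det_mprod]
        exact not_dvd_sprod hqp fun m _ hd => hBd _ (hd.mul_left _)
    | succ k ih =>
      have h1 : ∀ a : ℤ, ¬ q ∣ shift2 K a (N + 1) (et * Mt.det) := fun a =>
        hN _ _ (Or.inr (by rw [abs_of_nonneg] <;> omega))
      have h2 : ∀ a : ℤ, ¬ q ∣ shift2 K a (-N) (et * Mt.det) := fun a =>
        hN _ _ (Or.inr (by simp))
      simp only [map_mul] at h1 h2
      have hs := congrArg (mshift (-(B : ℤ) + k) 0) hrel
      simp only [mshift_smul, mshift_mul, mshift_mshift, map_mul, shift2_add, zero_add, add_zero]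
        at hs
      have e1 : -(B : ℤ) + ((k + 1 : ℕ) : ℤ) = -B + k + 1 := by push_cast; ring
      rw [e1]
      refine ValZero.step hqp (shift2_ne_zero _ _ hE0) ?_ ?_ ?_ ?_
        (hs.trans (by rw [mul_comm (shift2 K _ _ E)])) ih
      · exact fun hd => h1 _ (hd.mul_right _)
      · exact fun hd => h2 _ (hd.mul_right _)
      · rw [det_mshift]; exact fun hd => h1 _ (hd.mul_left _)
      · rw [det_mshift]; exact fun hd => h2 _ (hd.mul_left _)
  simpa [shift2_zero, mshift_zero] using key B

/-- If `M / e` is invertible along the orbit of `q`, the valuation of `Mt / et` is constant along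
`x`-shifts, hence zero. -/
lemma Compat.valZero_t [Nonempty n] {e et : MvPolynomial (Fin 2) K}
    {M Mt : Matrix n n (MvPolynomial (Fin 2) K)} (h : Compat e et M Mt)
    (het : et ≠ 0) (hMt : Mt.det ≠ 0)
    {q : MvPolynomial (Fin 2) K} (hq : FreeIrred q)
    (hA : ∀ a b : ℤ, ¬ q ∣ shift2 K a b (e * M.det)) :
    ValZero q et Mt := by
  have hqp := hq.1.prime
  obtain ⟨B, hB⟩ := hq.bound (mul_ne_zero het hMt)
  simp only [map_mul] at hA hB
  have key : ∀ k : ℕ, ValZero q (shift2 K 0 (-B + k) et) (mshift 0 (-B + k) Mt) := by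
    intro k
    induction k with
    | zero =>
      have hBd := hB 0 (-B + (0 : ℕ)) (Or.inr (by simp))
      apply valZero_of_not_dvd
      · exact fun hd => hBd (hd.mul_right _)
      · rw [det_mshift]; exact fun hd => hBd (hd.mul_left _)
    | succ k ih =>
      have hs := congrArg (mshift 0 (-(B : ℤ) + k)) h
      simp only [mshift_smul, mshift_mul, mshift_mshift, map_mul, shift2_add, zero_add, add_zero]
        at hs
      have e1 : -(B : ℤ) + ((k + 1 : ℕ) : ℤ) = -B + k + 1 := by push_cast; ring
      rw [e1]
      refine ValZero.step hqp (shift2_ne_zero _ _ het) ?_ ?_ ?_ ?_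
        (hs.symm.trans (by rw [mul_comm (shift2 K 0 (-(B : ℤ) + k + 1) et)])) ih
      · exact fun hd => hA _ _ (hd.mul_right _)
      · exact fun hd => hA _ _ (hd.mul_right _)
      · rw [det_mshift]; exact fun hd => hA _ _ (hd.mul_left _)
      · rw [det_mshift]; exact fun hd => hA _ _ (hd.mul_left _)
  simpa [shift2_zero, mshift_zero] using key B

/-- If only the factor with shift `0` can be singular at `q`, the product is nonzero modulo `q`
as soon as that factor is. -/
lemma not_dvd_mprod [Nonempty n] {q : MvPolynomial (Fin 2) K} (hq : Prime q)
    {M : Matrix n n (MvPolynomial (Fin 2) K)}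
    (hdet : ∀ k : ℤ, k ≠ 0 → ¬ q ∣ shift2 K 0 k M.det) (hM : ¬ ∀ i j, q ∣ M i j)
    (a : ℤ) (l : ℕ) : ¬ ∀ i j, q ∣ mprod M a l i j := by
  induction l with
  | zero =>
    intro hd
    obtain ⟨i⟩ := ‹Nonempty n›
    have := hd i i
    rw [mprod, Matrix.one_apply_eq] at this
    exact hq.not_dvd_one this
  | succ l ih =>
    by_cases h0 : a + l = 0
    · have hdet' : ¬ q ∣ (mprod M a l).det := by
        rw [det_mprod]
        have := not_dvd_sprod (f := M.det) (a := a) (c := 0) (l := l) hq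
          fun m hm => hdet _ (by omega)
        rwa [shift2_zero] at this
      have := dvd_mul_right_iff hq 1 hdet' (mshift 0 (a + l) M)
      simp only [pow_one] at this
      rw [mprod, this, h0, mshift_zero]
      exact hM
    · have := dvd_mul_left_iff hq 1 (U := mshift 0 (a + l) M)
        (by rw [det_mshift]; exact hdet _ h0) (mprod M a l)
      simp only [pow_one] at this
      rw [mprod, this]
      exact ih

/-- Determinants of compatible matrices are compatible, as `1 × 1` matrices. -/
lemma Compat.det {e et : MvPolynomial (Fin 2) K} {M Mt : Matrix n n (MvPolynomial (Fin 2) K)}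
    (h : Compat e et M Mt) :
    Compat (e ^ Fintype.card n) (et ^ Fintype.card n)
      (Matrix.of fun _ _ : Unit => M.det) (Matrix.of fun _ _ : Unit => Mt.det) := by
  have := congrArg Matrix.det h
  rw [Matrix.det_smul, Matrix.det_smul, Matrix.det_mul, Matrix.det_mul, det_mshift,
    det_mshift] at this
  ext1 i j
  simpa [mshift, Matrix.mul_apply, mul_pow] using this

/-- If `q ∣ e`, the numerator of a long product of shifts of `M / e` is nonzero modulo `q` and its
denominator is not, contradicting valuation `0`. -/
lemma not_dvd_e [Nonempty n] {e et : MvPolynomial (Fin 2) K}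
    {M Mt : Matrix n n (MvPolynomial (Fin 2) K)} (h : Compat e et M Mt)
    (he : e ≠ 0) (het : et ≠ 0) (hM : M.det ≠ 0) (hMt : Mt.det ≠ 0)
    (hgcdM : ∀ q : MvPolynomial (Fin 2) K, Irreducible q → q ∣ e → ¬ ∀ i j, q ∣ M i j)
    (hshiftfree : ∀ i : ℤ, i ≠ 0 →
      ∀ q : MvPolynomial (Fin 2) K, Irreducible q → degreeOf 1 q ≠ 0 →
        q ∣ M.det → ¬ q ∣ shift2 K 0 i e)
    {q : MvPolynomial (Fin 2) K} (hq : FreeIrred q) : ¬ q ∣ e := by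
  intro hqe
  obtain ⟨N, hN⟩ := h.valZero_mprod he het hM hMt hq
  refine not_dvd_mprod hq.1.prime (M := M) ?_ (hgcdM q hq.1 hqe) (-N) (2 * N + 1) ?_
  · intro k hk hd
    have hq' := hq.shift 0 (-k)
    refine hshiftfree (-k) (by omega) _ hq'.1 hq'.degreeOf_ne_zero ?_ (map_dvd _ hqe)
    rw [shift2_dvd_iff]
    simpa using hd
  · have hN1 := hN 1
    simp only [pow_one] at hN1
    refine hN1.1 (dvd_trans ?_ (Finset.dvd_prod_of_mem _ (Finset.mem_range.2
      (show N < 2 * N + 1 by omega))))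
    simpa [shift2_zero] using hqe

/-- Valuation `0` of the long product for `det (M / e)`, whose denominator is prime to `q`, shows
that `q` divides no `x`-shift of `det M` in the window. -/
lemma not_dvd_det {e et : MvPolynomial (Fin 2) K}
    {M Mt : Matrix n n (MvPolynomial (Fin 2) K)} (h : Compat e et M Mt)
    (he : e ≠ 0) (het : et ≠ 0) (hM : M.det ≠ 0) (hMt : Mt.det ≠ 0)
    {q : MvPolynomial (Fin 2) K} (hq : FreeIrred q)
    (hqe : ∀ q' : MvPolynomial (Fin 2) K, FreeIrred q' → ¬ q' ∣ e) : ¬ q ∣ M.det := by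
  intro hqM
  obtain ⟨N, hN⟩ := h.det.valZero_mprod (pow_ne_zero _ he) (pow_ne_zero _ het)
    (by simpa using hM) (by simpa using hMt) hq
  have hN1 := hN 1
  simp only [pow_one] at hN1
  have h1 : ¬ q ∣ sprod (e ^ Fintype.card n) (-N) (2 * N + 1) := by
    have := not_dvd_sprod (f := e ^ Fintype.card n) (a := -N) (c := 0) (l := 2 * N + 1)
      hq.1.prime fun m _ hd => by
        rw [map_pow] at hd
        have := hq.1.prime.dvd_of_dvd_pow hd
        refine hqe _ (hq.shift 0 (-(-N + m))) ?_
        rw [shift2_dvd_iff]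
        simpa using this
    rwa [shift2_zero] at this
  refine h1 (hN1.2 fun i j => ?_)
  have h2 := det_mprod (Matrix.of fun _ _ : Unit => M.det) (-N) (2 * N + 1)
  rw [Matrix.det_unique] at h2
  rw [Subsingleton.elim i default, Subsingleton.elim j default, h2]
  refine dvd_trans ?_ (Finset.dvd_prod_of_mem _ (Finset.mem_range.2
      (show N < 2 * N + 1 by omega)))
  simpa [shift2_zero] using hqM

end Transport

/-- Under the compatibility condition `σ_t((1/e)M)·(1/e_t)M_t = σ_x((1/e_t)M_t)·(1/e)M`
for invertible matrices, with gcds of entries of `M` with `e` and of `M_t` with `e_t` equal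
to `1`, and `gcd(det M, σ_x^i(e)) = 1` in `K(t)[x]` for all nonzero `i ∈ ℤ`, the polynomials
`e·det M` and `e_t·det M_t` are both integer-linear. -/
theorem compat_integer_linear (K : Type*) [Field K] [CharZero K] (r : ℕ)
    (e et : MvPolynomial (Fin 2) K) (he : e ≠ 0) (het : et ≠ 0)
    (M Mt : Matrix (Fin r) (Fin r) (MvPolynomial (Fin 2) K))
    (hM : M.det ≠ 0) (hMt : Mt.det ≠ 0)
    (hcompat : (shift2 K 0 1 et * e) • ((M.map (shift2 K 1 0)) * Mt)
             = (shift2 K 1 0 e * et) • ((Mt.map (shift2 K 0 1)) * M))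
    (hgcdM : ∀ q : MvPolynomial (Fin 2) K, Irreducible q → q ∣ e → ¬ ∀ i j, q ∣ M i j)
    (hgcdMt : ∀ q : MvPolynomial (Fin 2) K, Irreducible q → q ∣ et → ¬ ∀ i j, q ∣ Mt i j)
    (hshiftfree : ∀ i : ℤ, i ≠ 0 →
      ∀ q : MvPolynomial (Fin 2) K, Irreducible q → degreeOf 1 q ≠ 0 →
        q ∣ M.det → ¬ q ∣ shift2 K 0 i e) :
    IsIntegerLinear (e * M.det) ∧ IsIntegerLinear (et * Mt.det) := by
  have hC : Compat e et M Mt := hcompat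
  -- for `r = 0` the gcd condition makes the denominator a unit, so there is nothing to prove
  have hr : ∀ {f : MvPolynomial (Fin 2) K} {N : Matrix (Fin r) (Fin r) (MvPolynomial (Fin 2) K)}
      {q : MvPolynomial (Fin 2) K}, Irreducible q → q ∣ f * N.det →
      (∀ q : MvPolynomial (Fin 2) K, Irreducible q → q ∣ f → ¬ ∀ i j, q ∣ N i j) →
      Nonempty (Fin r) := by
    intro f N q hq hd hg
    by_contra hne
    rw [not_nonempty_iff] at hne
    rw [Matrix.det_isEmpty, mul_one] at hd
    exact hg q hq hd fun i => isEmptyElim i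
  have hMain : ∀ q : MvPolynomial (Fin 2) K, FreeIrred q → ¬ q ∣ e * M.det := by
    intro q hq hd
    have := hr hq.1 hd hgcdM
    have h1 : ∀ q' : MvPolynomial (Fin 2) K, FreeIrred q' → ¬ q' ∣ e := fun q' hq' =>
      not_dvd_e hC he het hM hMt hgcdM hshiftfree hq'
    exact (hq.1.prime.dvd_or_dvd hd).elim (h1 q hq) (not_dvd_det hC he het hM hMt hq h1)
  refine ⟨fun q hq hd => ?_, fun q hq hd => ?_⟩
  · by_contra hn
    exact hMain q (freeIrred_of_not_integerLinear hq hn) hd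
  · by_contra hn
    have hqf := freeIrred_of_not_integerLinear hq hn
    have := hr hq hd hgcdMt
    have hA : ∀ a b : ℤ, ¬ q ∣ shift2 K a b (e * M.det) := by
      intro a b hd'
      refine hMain _ (hqf.shift (-a) (-b)) ?_
      rw [shift2_dvd_iff]
      simpa using hd'
    have hnet : ¬ q ∣ et := fun hqet => by
      have := hC.valZero_t het hMt hqf hA 1
      simp only [pow_one] at this
      exact hgcdMt q hq hqet (this.1 hqet)
    have hA' : ∀ a b : ℤ, ¬ q ∣ shift2 K a b
        (e ^ Fintype.card (Fin r) * (Matrix.of fun _ _ : Unit => M.det).det) := by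
      intro a b hd'
      rw [map_mul, map_pow, Matrix.det_unique] at hd'
      refine hA a b ?_
      rw [map_mul]
      exact (hq.prime.dvd_or_dvd hd').elim (fun h => (hq.prime.dvd_of_dvd_pow h).mul_right _)
        (fun h => Dvd.dvd.mul_left h _)
    have hb := hC.det.valZero_t (pow_ne_zero _ het) (by simpa using hMt) hqf hA' 1
    simp only [pow_one] at hb
    refine (hq.prime.dvd_or_dvd hd).elim hnet fun hdet => hnet ?_
    exact hq.prime.dvd_of_dvd_pow (hb.2 fun _ _ => hdet)
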